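/- Suppose f is such a piecewise-C² one-parameter family with β > 0, (a_L − 1)(a_R − 1) > 0, (a_L + 1)(a_R + 1) > 0, a_L ≠ 0, and a_R ≠ 0, and let ν(μ) = f(0;μ). Then there exist μ₀ > 0, continuous functions s_L, s_R : (−μ₀, μ₀) → ℝ with s_L(μ) = a_L + O(μ) and s_R(μ) = a_R + O(μ) as μ → 0, and open neighbourhoods N of 0 and M(μ) of 0, such that f(·;μ) on N and the extended normal form g(·; ν(μ), s_L(μ), s_R(μ), 0) on M(μ) are differentiably conjugate for every μ ∈ (−μ₀, μ₀). Moreover, for any δ > 0 one can choose μ₀ > 0, N = (−p, p), and M(μ) = (q⁻(μ), q⁺(μ)) so that (1 − δ)p < |q⁻(μ)| < (1 + δ)p and (1 − δ)p < |q⁺(μ)| < (1 + δ)p for all μ ∈ (−μ₀, μ₀). -/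

import Mathlib

/-- The piecewise-smooth family: `f(x;μ) = f_L(x;μ)` for `x ≤ 0` and `f_R(x;μ)` for `x > 0`
(these agree when the continuity condition `f_L(0;μ) = f_R(0;μ)` holds). -/
noncomputable def pwFam (fL fR : ℝ → ℝ → ℝ) (μ : ℝ) : ℝ → ℝ :=
  fun x => if x ≤ 0 then fL x μ else fR x μ

/-- The extended normal form `g(y; ν, s_L, s_R, t)`. -/
noncomputable def enf (ν sL sR t : ℝ) : ℝ → ℝ :=
  fun y => if y ≤ 0 then ν + sL * y + t * y ^ 2 else ν + sR * y

/-- `h` is a `C¹` diffeomorphism from `U` onto `V`. -/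
def IsDiffeoOn (h : ℝ → ℝ) (U V : Set ℝ) : Prop :=
  Set.BijOn h U V ∧ ContDiffOn ℝ 1 h U ∧
    ∃ hinv : ℝ → ℝ, Set.InvOn hinv h U V ∧ ContDiffOn ℝ 1 hinv V

/-- `h` intertwines `f` and `g` on `U`: `h (f x) = g (h x)` for all `x ∈ U` with `f x ∈ U`. -/
def ConjRelOn (h f g : ℝ → ℝ) (U : Set ℝ) : Prop :=
  ∀ x ∈ U, f x ∈ U → h (f x) = g (h x)

/-- `f` on `U` is differentiably conjugate to `g` on `V`. -/
def DiffConjOn (f g : ℝ → ℝ) (U V : Set ℝ) : Prop :=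
  ∃ h : ℝ → ℝ, IsDiffeoOn h U V ∧ ConjRelOn h f g U


section helpers
open Set

theorem side_data (ω₁ ω₂ ι₁ ι₂ a α b : ℝ) (f : ℝ → ℝ → ℝ)
    (hω₁ : ω₁ < 0) (hω₂ : 0 < ω₂) (hι₁ : ι₁ < 0) (hι₂ : 0 < ι₂)
    (hf : ContDiffOn ℝ 2 (fun p : ℝ × ℝ => f p.1 p.2) (Set.Ioo ω₁ ω₂ ×ˢ Set.Ioo ι₁ ι₂))
    (ha : deriv (fun x => f x 0) 0 = a) (ha0 : a ≠ 0) (hα : α < a) (hb : a < b) :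
    ∃ r > 0, ∃ L > 0, ∃ k : ℝ → ℝ, ∃ E : ℝ → ℝ → ℝ, k 0 = a ∧
      ∀ x μ, |x| < r → |μ| < r →
        x ∈ Ioo ω₁ ω₂ ∧ μ ∈ Ioo ι₁ ι₂ ∧ HasDerivAt (fun x => f x μ) (k μ * E x μ) x ∧
        E 0 μ = 1 ∧ |E x μ - 1| ≤ 1/2 ∧ α ≤ k μ * E x μ ∧ k μ * E x μ ≤ b ∧
        ∀ x' μ', |x'| < r → |μ'| < r →
          |E x μ - E x' μ'| ≤ L * (|x - x'| + |μ - μ'|) ∧ |k μ - k μ'| ≤ L * |μ - μ'| ∧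
          |f x μ - f x μ'| ≤ L * |μ - μ'| := by
  set F : ℝ × ℝ → ℝ := fun p => f p.1 p.2 with hF
  have hopen : IsOpen (Ioo ω₁ ω₂ ×ˢ Ioo ι₁ ι₂) := isOpen_Ioo.prod isOpen_Ioo
  have h0 : ((0:ℝ),(0:ℝ)) ∈ Ioo ω₁ ω₂ ×ˢ Ioo ι₁ ι₂ := ⟨⟨hω₁, hω₂⟩, ⟨hι₁, hι₂⟩⟩
  have hFat : ContDiffAt ℝ 2 F (0,0) := hf.contDiffAt (hopen.mem_nhds h0)
  obtain ⟨K₁, t₁, ht₁, hL₁⟩ := (hFat.of_le (by norm_num : (1 : WithTop ℕ∞) ≤ 2)).exists_lipschitzOnWith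
  have hdF : ContDiffAt ℝ 1 (fderiv ℝ F) (0,0) := hFat.fderiv_right (by norm_num)
  obtain ⟨K₂, t₂, ht₂, hL₂⟩ := hdF.exists_lipschitzOnWith
  set d : ℝ → ℝ → ℝ := fun x μ => fderiv ℝ F (x, μ) (1, 0) with hd
  have hder : ∀ x μ, (x, μ) ∈ Ioo ω₁ ω₂ ×ˢ Ioo ι₁ ι₂ → HasDerivAt (fun x => f x μ) (d x μ) x := by
    intro x μ hx
    have h1 : HasFDerivAt F (fderiv ℝ F (x, μ)) (x, μ) :=
      ((hf.contDiffAt (hopen.mem_nhds hx)).differentiableAt (by norm_num)).hasFDerivAt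
    have h2 : HasDerivAt (fun x : ℝ => (x, μ)) ((1:ℝ), (0:ℝ)) x :=
      (hasDerivAt_id x).prodMk (hasDerivAt_const x μ)
    exact h1.comp_hasDerivAt x h2
  have hd0 : d 0 0 = a := by rw [← ha]; exact (hder 0 0 h0).deriv.symm
  -- neighborhoods
  obtain ⟨r₁, hr₁, hball⟩ := Metric.mem_nhds_iff.1 (Filter.inter_mem (Filter.inter_mem ht₁ ht₂) (hopen.mem_nhds h0))
  have hmem : ∀ x μ, |x| < r₁ → |μ| < r₁ → (x, μ) ∈ (t₁ ∩ t₂) ∩ (Ioo ω₁ ω₂ ×ˢ Ioo ι₁ ι₂) := by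
    intro x μ hx hμ
    apply hball
    rw [Metric.mem_ball, Prod.dist_eq]
    simp [Real.dist_eq, hx, hμ]
  set K : ℝ := K₁ + K₂ + 1 with hK
  have hKpos : 0 < K := by positivity
  have hdL : ∀ x μ x' μ', |x| < r₁ → |μ| < r₁ → |x'| < r₁ → |μ'| < r₁ →
      |d x μ - d x' μ'| ≤ K * (|x - x'| + |μ - μ'|) := by
    intro x μ x' μ' hx hμ hx' hμ'
    have h1 := hL₂.dist_le_mul _ (hmem x μ hx hμ).1.2 _ (hmem x' μ' hx' hμ').1.2
    rw [dist_eq_norm] at h1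
    have h2 : |d x μ - d x' μ'| ≤ ‖fderiv ℝ F (x, μ) - fderiv ℝ F (x', μ')‖ := by
      have := (fderiv ℝ F (x, μ) - fderiv ℝ F (x', μ')).le_opNorm (1, 0)
      simpa [hd, Prod.norm_def] using this
    have h3 : dist (x, μ) (x', μ') ≤ |x - x'| + |μ - μ'| := by
      rw [Prod.dist_eq]; simp [Real.dist_eq]
    have h4 : (K₂:ℝ) ≤ K := by rw [hK]; have := K₁.coe_nonneg; linarith
    calc _ ≤ K₂ * dist (x, μ) (x', μ') := h2.trans h1
      _ ≤ _ := by gcongr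
  have hfL : ∀ x μ μ', |x| < r₁ → |μ| < r₁ → |μ'| < r₁ → |f x μ - f x μ'| ≤ K * |μ - μ'| := by
    intro x μ μ' hx hμ hμ'
    have h1 := hL₁.dist_le_mul _ (hmem x μ hx hμ).1.1 _ (hmem x μ' hx hμ').1.1
    have h3 : dist (x, μ) (x, μ') ≤ |μ - μ'| := by
      rw [Prod.dist_eq]; simp [Real.dist_eq]
    have h4 : (K₁:ℝ) ≤ K := by rw [hK]; have := K₂.coe_nonneg; linarith
    rw [Real.dist_eq] at h1
    calc _ ≤ K₁ * dist (x, μ) (x, μ') := h1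
      _ ≤ _ := by gcongr
  -- choose small tolerance
  obtain ⟨η, hη, hη1, hη2, hη3⟩ : ∃ η > 0, η ≤ a - α ∧ η ≤ b - a ∧ η ≤ |a| / 6 := by
    refine ⟨min (min (a - α) (b - a)) (|a|/6), ?_, ?_, ?_, ?_⟩
    · have := abs_pos.2 ha0
      simp; grind
    · simp
    · simp
    · simp
  have hapos := abs_pos.2 ha0
  set r := min r₁ (η / (2 * K)) with hr
  have hrpos : 0 < r := by rw [hr]; positivity
  have hrr : r ≤ r₁ := min_le_left _ _
  have hrK : K * (2 * r) ≤ η := by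
    have : r ≤ η / (2 * K) := min_le_right _ _
    rw [le_div_iff₀ (by positivity)] at this; linarith
  have hclose : ∀ x μ, |x| < r → |μ| < r → |d x μ - a| ≤ η := by
    intro x μ hx hμ
    have := hdL x μ 0 0 (by linarith) (by linarith) (by simpa) (by simpa)
    rw [hd0, sub_zero, sub_zero] at this
    refine this.trans (le_trans ?_ hrK)
    gcongr; linarith
  have hlow : ∀ x μ, |x| < r → |μ| < r → |a| * (5/6) ≤ |d x μ| := by
    intro x μ hx hμ
    have h1 := hclose x μ hx hμ
    have h2 := abs_sub_abs_le_abs_sub a (d x μ)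
    rw [abs_sub_comm] at h2; linarith
  have hr0 : |(0:ℝ)| < r := by simpa
  refine ⟨r, hrpos, max K (K * (4 / |a|)), by positivity, fun μ => d 0 μ, fun x μ => d x μ / d 0 μ, hd0, ?_⟩
  intro x μ hx hμ
  have hne : d 0 μ ≠ 0 := by
    have := hlow 0 μ hr0 hμ
    exact abs_pos.1 (by linarith)
  have hm := hmem x μ (by linarith) (by linarith)
  have hE : d 0 μ * (d x μ / d 0 μ) = d x μ := by field_simp
  have hE1 : ∀ x μ, |x| < r → |μ| < r → |d x μ / d 0 μ - 1| ≤ 1/2 := by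
    intro x μ hx hμ
    have hpos : 0 < |d 0 μ| := by have := hlow 0 μ hr0 hμ; linarith
    have hne : d 0 μ ≠ 0 := abs_pos.1 hpos
    have : d x μ / d 0 μ - 1 = ((d x μ - a) - (d 0 μ - a)) / d 0 μ := by field_simp; ring
    rw [this, abs_div, div_le_iff₀ hpos]
    have h1 := hclose x μ hx hμ
    have h2 := hclose 0 μ hr0 hμ
    have h3 := hlow 0 μ hr0 hμ
    have := abs_sub (d x μ - a) (d 0 μ - a)
    linarith
  simp only []
  rw [hE]
  have hc := abs_le.1 (hclose x μ hx hμ)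
  refine ⟨hm.2.1, hm.2.2, hder x μ hm.2, div_self hne, hE1 x μ hx hμ, by linarith, by linarith, ?_⟩
  intro x' μ' hx' hμ'
  refine ⟨?_, ?_, ?_⟩
  · have hpos : 0 < |d 0 μ| := abs_pos.2 hne
    have hne' : d 0 μ' ≠ 0 := by
      have := hlow 0 μ' hr0 hμ'
      exact abs_pos.1 (by linarith)
    have e1 : d x μ / d 0 μ - d x' μ' / d 0 μ' =
      ((d x μ - d x' μ') - (d x' μ' / d 0 μ') * (d 0 μ - d 0 μ')) / d 0 μ := by
      field_simp; ring
    have h1 := hdL x μ x' μ' (by linarith) (by linarith) (by linarith) (by linarith)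
    have h2 := hdL 0 μ 0 μ' (by linarith) (by linarith) (by linarith) (by linarith)
    have h3 : |d x' μ' / d 0 μ'| ≤ 3/2 := by
      have := abs_le.1 (hE1 x' μ' hx' hμ')
      rw [abs_le]; constructor <;> linarith
    have h4 := hlow 0 μ hr0 hμ
    rw [sub_self, abs_zero, zero_add] at h2
    set S := |x - x'| + |μ - μ'|
    have hS : |μ - μ'| ≤ S := le_add_of_nonneg_left (abs_nonneg _)
    have h5 : |(d x μ - d x' μ') - (d x' μ' / d 0 μ') * (d 0 μ - d 0 μ')| ≤ K * S + 3/2 * (K * S) := by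
      refine (abs_sub _ _).trans ?_
      rw [abs_mul]
      gcongr
      exact h2.trans (by gcongr)
    have hSn : 0 ≤ S := by positivity
    refine le_trans ?_ (mul_le_mul_of_nonneg_right (le_max_right K (K * (4 / |a|))) hSn)
    rw [e1, abs_div, div_le_iff₀ hpos]
    refine h5.trans ?_
    have : K * (4 / |a|) * S * (|a| * (5/6)) ≤ K * (4 / |a|) * S * |d 0 μ| := by gcongr
    refine le_trans ?_ this
    have e : K * (4 / |a|) * S * (|a| * (5/6)) = K * S * (10/3) := by field_simp; ring
    rw [e]
    have : 0 ≤ K * S := by positivity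
    linarith
  · have h2 := hdL 0 μ 0 μ' (by linarith) (by linarith) (by linarith) (by linarith)
    rw [sub_self, abs_zero, zero_add] at h2
    exact h2.trans (by gcongr; exact le_max_left _ _)
  · exact (hfL x μ μ' (by linarith) (by linarith) (by linarith)).trans (by gcongr; exact le_max_left _ _)


theorem series_sol (T ψ e : ℝ → ℝ) (lam K B : ℝ) (hl0 : 0 ≤ lam) (hl : lam < 1) (hK : 0 ≤ K)
    (hT : Continuous T) (hψ : Continuous ψ) (he : ∀ x, e (T x) ≤ lam * e x) (hB : ∀ x, e x ≤ B)
    (hψe : ∀ x, |ψ x| ≤ K * e x) :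
    ∃ u : ℝ → ℝ, Continuous u ∧ (∀ x, u x = ψ x + u (T x)) ∧ ∀ x, |u x| ≤ K * B / (1 - lam) := by
  have hit : ∀ n x, e (T^[n] x) ≤ lam ^ n * B := by
    intro n
    induction n with
    | zero => intro x; simpa using hB x
    | succ n ih =>
      intro x
      rw [Function.iterate_succ_apply']
      refine (he _).trans ?_
      rw [pow_succ', mul_assoc]
      exact mul_le_mul_of_nonneg_left (ih x) hl0
  have hbd : ∀ n x, ‖ψ (T^[n] x)‖ ≤ K * B * lam ^ n := by
    intro n x
    rw [Real.norm_eq_abs]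
    refine (hψe _).trans ?_
    have := mul_le_mul_of_nonneg_left (hit n x) hK
    linarith
  have hsum : Summable (fun n : ℕ => K * B * lam ^ n) := (summable_geometric_of_lt_one hl0 hl).mul_left _
  have hs : ∀ x, Summable (fun n : ℕ => ψ (T^[n] x)) := fun x =>
    Summable.of_norm_bounded hsum (fun n => hbd n x)
  refine ⟨fun x => ∑' n, ψ (T^[n] x), ?_, ?_, ?_⟩
  · exact continuous_tsum (fun n => hψ.comp (hT.iterate n)) hsum hbd
  · intro x
    show ∑' n, ψ (T^[n] x) = ψ x + ∑' n, ψ (T^[n] (T x))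
    rw [(hs x).tsum_eq_zero_add]
    simp [Function.iterate_succ_apply]
  · intro x
    have h1 := tsum_of_norm_bounded (hsum.hasSum) (fun n => hbd n x)
    rw [tsum_mul_left, tsum_geometric_of_lt_one hl0 hl] at h1
    simpa [div_eq_mul_inv] using h1

/-- One side of the conjugacy relation. -/
theorem side_conj (h u F d : ℝ → ℝ) (c s ν x : ℝ)
    (hh : ∀ t, HasDerivAt h (c * Real.exp (u t)) t) (h0 : h 0 = 0) (hν : h ν = ν) (hF0 : F 0 = ν)
    (hF : ∀ t ∈ uIcc 0 x, HasDerivAt F (d t) t)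
    (he : ∀ t ∈ uIcc 0 x, Real.exp (u (F t)) * d t = s * Real.exp (u t)) :
    h (F x) = ν + s * h x := by
  have key : ∀ t ∈ uIcc 0 x, HasDerivWithinAt (fun t => h (F t) - s * h t) 0 (uIcc 0 x) t := by
    intro t ht
    have h1 : HasDerivAt (fun t => h (F t)) (c * Real.exp (u (F t)) * d t) t := (hh (F t)).comp t (hF t ht)
    have h2 := h1.sub ((hh t).const_mul s)
    have e : c * Real.exp (u (F t)) * d t - s * (c * Real.exp (u t)) = 0 := by
      have := he t ht
      linear_combination c * this
    rw [e] at h2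
    exact h2.hasDerivWithinAt
  have := Convex.norm_image_sub_le_of_norm_hasDerivWithin_le (C := 0) key (by simp) (convex_uIcc 0 x)
    left_mem_uIcc right_mem_uIcc
  simp only [hF0, h0, hν, zero_mul, norm_le_zero_iff] at this
  linarith

theorem diffeo_of_deriv (h d : ℝ → ℝ) (m p : ℝ) (hm : 0 < m) (hd : Continuous d)
    (hmd : ∀ t, m ≤ d t) (hh : ∀ t, HasDerivAt h (d t) t) (h0 : h 0 = 0) :
    IsDiffeoOn h (Ioo (-p) p) (Ioo (h (-p)) (h p)) := by
  have hpos : ∀ t, 0 < d t := fun t => hm.trans_le (hmd t)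
  have hderiv : deriv h = d := funext fun t => (hh t).deriv
  have hdiff : Differentiable ℝ h := fun t => (hh t).differentiableAt
  have hcd : ContDiff ℝ 1 h := contDiff_one_iff_deriv.2 ⟨hdiff, by rwa [hderiv]⟩
  have hmono : StrictMono h := strictMono_of_deriv_pos (by intro x; rw [hderiv]; exact hpos x)
  have hmono' : Monotone (fun t => h t - m * t) := by
    apply monotone_of_deriv_nonneg
    · fun_prop
    · intro x
      have := (hh x).sub ((hasDerivAt_id x).const_mul m)
      have e : deriv (fun t => h t - m * t) x = d x - m * 1 := this.deriv
      rw [e]; linarith [hmd x]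
  have hsurj : Function.Surjective h := by
    apply hdiff.continuous.surjective
    · apply Filter.tendsto_atTop_mono' _ _ (Filter.tendsto_id.const_mul_atTop hm)
      filter_upwards [Filter.eventually_ge_atTop 0] with t ht
      have := hmono' ht
      simp [h0] at this; simpa using this
    · apply Filter.tendsto_atBot_mono' _ _ (Filter.tendsto_id.const_mul_atBot hm)
      filter_upwards [Filter.eventually_le_atBot 0] with t ht
      have := hmono' ht
      simp [h0] at this; simpa using this
  let H : ℝ ≃o ℝ := hmono.orderIsoOfSurjective h hsurj
  have hH : ∀ x, H x = h x := fun x => rfl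
  refine ⟨⟨?_, hmono.injective.injOn, ?_⟩, hcd.contDiffOn, H.symm, ⟨?_, ?_⟩, ?_⟩
  · intro x hx; exact ⟨hmono hx.1, hmono hx.2⟩
  · intro y hy
    obtain ⟨x, rfl⟩ := hsurj y
    exact ⟨x, ⟨hmono.lt_iff_lt.1 hy.1, hmono.lt_iff_lt.1 hy.2⟩, rfl⟩
  · intro x _; rw [← hH]; simp
  · intro x _; rw [← hH]; simp
  · apply ContDiff.contDiffOn
    rw [contDiff_iff_contDiffAt]
    intro y
    let P := H.toHomeomorph.toOpenPartialHomeomorph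
    have := P.contDiffAt_symm_deriv (n := 1) (a := y) (f₀' := d (H.symm y)) (hpos _).ne' (by simp [P])
      (hh _) hcd.contDiffAt
    exact this

theorem mv_bd (F d : ℝ → ℝ) (α b x y : ℝ) (hyx : y ≤ x)
    (h : ∀ t ∈ Icc y x, HasDerivAt F (d t) t) (hα : ∀ t ∈ Icc y x, α ≤ d t)
    (hb : ∀ t ∈ Icc y x, d t ≤ b) :
    α * (x - y) ≤ F x - F y ∧ F x - F y ≤ b * (x - y) := by
  rcases hyx.eq_or_lt with rfl | hlt
  · simp
  · obtain ⟨t, ht, he⟩ := exists_hasDerivAt_eq_slope F d hlt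
      (fun t ht => (h t ht).continuousAt.continuousWithinAt) (fun t ht => h t (Ioo_subset_Icc_self ht))
    have h1 := hα t (Ioo_subset_Icc_self ht)
    have h2 := hb t (Ioo_subset_Icc_self ht)
    have hpos : 0 < x - y := sub_pos.2 hlt
    rw [he] at h1 h2
    rw [le_div_iff₀ hpos] at h1
    rw [div_le_iff₀ hpos] at h2
    exact ⟨h1, h2⟩

theorem slope_bd (fl fr f dl dr : ℝ → ℝ) (p α b : ℝ)
    (hfl : ∀ x ≤ 0, f x = fl x) (hfr : ∀ x, 0 ≤ x → f x = fr x)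
    (hdl : ∀ x ∈ Icc (-p) 0, HasDerivAt fl (dl x) x ∧ α ≤ dl x ∧ dl x ≤ b)
    (hdr : ∀ x ∈ Icc 0 p, HasDerivAt fr (dr x) x ∧ α ≤ dr x ∧ dr x ≤ b) :
    ∀ x ∈ Icc (-p) p, ∀ y ∈ Icc (-p) p, y ≤ x → α * (x - y) ≤ f x - f y ∧ f x - f y ≤ b * (x - y) := by
  have L : ∀ x ∈ Icc (-p) 0, ∀ y ∈ Icc (-p) 0, y ≤ x →
      α * (x - y) ≤ f x - f y ∧ f x - f y ≤ b * (x - y) := by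
    intro x hx y hy hyx
    rw [hfl x hx.2, hfl y hy.2]
    have hs : Icc y x ⊆ Icc (-p) 0 := Icc_subset_Icc hy.1 hx.2
    exact mv_bd fl dl α b x y hyx (fun t ht => (hdl t (hs ht)).1) (fun t ht => (hdl t (hs ht)).2.1)
      (fun t ht => (hdl t (hs ht)).2.2)
  have R : ∀ x ∈ Icc 0 p, ∀ y ∈ Icc 0 p, y ≤ x →
      α * (x - y) ≤ f x - f y ∧ f x - f y ≤ b * (x - y) := by
    intro x hx y hy hyx
    rw [hfr x hx.1, hfr y hy.1]
    have hs : Icc y x ⊆ Icc 0 p := Icc_subset_Icc hy.1 hx.2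
    exact mv_bd fr dr α b x y hyx (fun t ht => (hdr t (hs ht)).1) (fun t ht => (hdr t (hs ht)).2.1)
      (fun t ht => (hdr t (hs ht)).2.2)
  intro x hx y hy hyx
  rcases le_total x 0 with h1 | h1
  · exact L x ⟨hx.1, h1⟩ y ⟨hy.1, hyx.trans h1⟩ hyx
  · rcases le_total 0 y with h2 | h2
    · exact R x ⟨h1, hx.2⟩ y ⟨h2, hy.2⟩ hyx
    · have e1 := R x ⟨h1, hx.2⟩ 0 ⟨le_rfl, h1.trans hx.2⟩ h1
      have e2 := L 0 ⟨hy.1.trans h2, le_rfl⟩ y ⟨hy.1, h2⟩ h2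
      constructor <;> linarith [e1.1, e1.2, e2.1, e2.2]

/-- gap condition -/
def GapC (γ α b : ℝ) : Prop := 1 + γ ≤ α ∨ (-1 + γ ≤ α ∧ b ≤ 1 - γ) ∨ b ≤ -1 - γ

def SlopeC (f : ℝ → ℝ) (p α b : ℝ) : Prop :=
  ∀ x ∈ Icc (-p) p, ∀ y ∈ Icc (-p) p, y ≤ x → α * (x - y) ≤ f x - f y ∧ f x - f y ≤ b * (x - y)

theorem SlopeC.cont {f : ℝ → ℝ} {p α b : ℝ} (h : SlopeC f p α b) : ContinuousOn f (Icc (-p) p) := by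
  have : LipschitzOnWith (Real.toNNReal (|α| + |b|)) f (Icc (-p) p) := by
    have key : ∀ x ∈ Icc (-p) p, ∀ y ∈ Icc (-p) p, y ≤ x → |f x - f y| ≤ (|α| + |b|) * |x - y| := by
      intro x hx y hy hyx
      have h1 := h x hx y hy hyx
      have h2 : 0 ≤ x - y := sub_nonneg.2 hyx
      rw [abs_of_nonneg h2, abs_le]
      have e1 := mul_le_mul_of_nonneg_right (le_abs_self b) h2
      have e2 := mul_le_mul_of_nonneg_right (neg_abs_le α) h2
      have e3 := mul_nonneg (abs_nonneg b) h2
      have e4 := mul_nonneg (abs_nonneg α) h2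
      constructor <;> nlinarith
    apply LipschitzOnWith.of_dist_le_mul
    intro x hx y hy
    rw [Real.coe_toNNReal _ (by positivity), Real.dist_eq, Real.dist_eq]
    rcases le_total y x with h | h
    · exact key x hx y hy h
    · rw [abs_sub_comm, abs_sub_comm x]; exact key y hy x hx h
  exact this.continuousOn

theorem fix_sep {f : ℝ → ℝ} {p α b γ : ℝ} (h : SlopeC f p α b) (hγ : 0 < γ) (hg : GapC γ α b) :
    ∀ x ∈ Icc (-p) p, ∀ y ∈ Icc (-p) p, γ * |x - y| ≤ |(f x - x) - (f y - y)| := by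
  have key : ∀ x ∈ Icc (-p) p, ∀ y ∈ Icc (-p) p, y ≤ x → γ * |x - y| ≤ |(f x - x) - (f y - y)| := by
    intro x hx y hy hyx
    obtain ⟨h1, h2⟩ := h x hx y hy hyx
    have h3 : 0 ≤ x - y := sub_nonneg.2 hyx
    rw [abs_of_nonneg h3, le_abs]
    rcases hg with hg | ⟨-, hg⟩ | hg
    · left; nlinarith
    · right; nlinarith
    · right; nlinarith
  intro x hx y hy
  rcases le_total y x with h | h
  · exact key x hx y hy h
  · rw [abs_sub_comm, abs_sub_comm (f x - x)]; exact key y hy x hx h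

theorem fix_exists {f : ℝ → ℝ} {p α b γ : ℝ} (hp : 0 < p) (h : SlopeC f p α b) (hγ : 0 < γ)
    (hg : GapC γ α b) (hν : |f 0| < γ * p) : ∃ x ∈ Ioo (-p) p, f x = x := by
  have hc : ContinuousOn (fun x => f x - x) (Icc (-p) p) := h.cont.sub continuousOn_id
  have m0 : (0:ℝ) ∈ Icc (-p) p := ⟨by linarith, hp.le⟩
  have mp : p ∈ Icc (-p) p := ⟨by linarith, le_rfl⟩
  have mm : -p ∈ Icc (-p) p := ⟨le_rfl, by linarith⟩
  obtain ⟨a1, a2⟩ := h p mp 0 m0 hp.le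
  obtain ⟨b1, b2⟩ := h 0 m0 (-p) mm (by linarith)
  rw [abs_lt] at hν
  rcases hg with hg | ⟨-, hg⟩ | hg
  · have := intermediate_value_Ioo (by linarith : -p ≤ p) hc
    obtain ⟨x, hx, he⟩ := this (show (0:ℝ) ∈ _ from ⟨by nlinarith, by nlinarith⟩)
    exact ⟨x, hx, by simpa [sub_eq_zero] using he⟩
  · have := intermediate_value_Ioo' (by linarith : -p ≤ p) hc
    obtain ⟨x, hx, he⟩ := this (show (0:ℝ) ∈ _ from ⟨by nlinarith, by nlinarith⟩)
    exact ⟨x, hx, by simpa [sub_eq_zero] using he⟩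
  · have := intermediate_value_Ioo' (by linarith : -p ≤ p) hc
    obtain ⟨x, hx, he⟩ := this (show (0:ℝ) ∈ _ from ⟨by nlinarith, by nlinarith⟩)
    exact ⟨x, hx, by simpa [sub_eq_zero] using he⟩

noncomputable def cl (p x : ℝ) : ℝ := max (-p) (min p x)

theorem cl_mem {p : ℝ} (hp : 0 < p) (x : ℝ) : cl p x ∈ Icc (-p) p := by
  unfold cl; exact ⟨le_max_left _ _, max_le (by linarith) (min_le_left _ _)⟩

theorem cl_eq {p x : ℝ} (hx : x ∈ Icc (-p) p) : cl p x = x := by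
  unfold cl; rw [min_eq_right hx.2, max_eq_right hx.1]

theorem cl_cont (p : ℝ) : Continuous (cl p) := by unfold cl; fun_prop

theorem cl_lip (p x y : ℝ) : |cl p x - cl p y| ≤ |x - y| := by
  unfold cl; grind

/-- the solution of the cohomological equation -/
theorem u_exists (f w : ℝ → ℝ) (p α b γ K xs : ℝ) (hp : 0 < p) (hγ : 0 < γ) (hγ1 : γ ≤ 1)
    (h : SlopeC f p α b) (hg : GapC γ α b) (hν : |f 0| < γ * p) (hxs : xs ∈ Ioo (-p) p)
    (hfx : f xs = xs) (hK : 0 ≤ K) (hwc : ContinuousOn w (Icc (-p) p))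
    (hw : ∀ x ∈ Icc (-p) p, |w x| ≤ K * |x - xs|) :
    ∃ u : ℝ → ℝ, Continuous u ∧ (∀ x, |u x| ≤ K * (2 * p) / (1 - (1 - γ / 2))) ∧
      (∀ x ∈ Ioo (-p) p, f x ∈ Ioo (-p) p → u x = w x + u (f x)) ∧
      (∀ x ∈ Ioo (-p) p, f x ∈ Ioo (-p) p → ∀ t ∈ uIcc 0 x, f t ∈ Ioo (-p) p) := by
  have hxs' := Ioo_subset_Icc_self hxs
  have m0 : (0:ℝ) ∈ Icc (-p) p := ⟨by linarith, hp.le⟩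
  have hB : ∀ x, |cl p x - xs| ≤ 2 * p := by
    intro x
    have := cl_mem hp x
    rw [abs_le]; constructor <;> linarith [this.1, this.2, hxs.1, hxs.2]
  have hor : (∀ x ∈ Icc (-p) p, ∀ y ∈ Icc (-p) p, |f x - f y| ≤ (1 - γ) * |x - y|) ∨
      ((∀ x ∈ Icc (-p) p, ∀ y ∈ Icc (-p) p, (1 + γ) * |x - y| ≤ |f x - f y|) ∧
        (StrictMonoOn f (Icc (-p) p) ∨ StrictAntiOn f (Icc (-p) p)) ∧ Icc (-p) p ⊆ f '' Icc (-p) p) := by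
    have mp : p ∈ Icc (-p) p := ⟨by linarith, le_rfl⟩
    have mm : -p ∈ Icc (-p) p := ⟨le_rfl, by linarith⟩
    obtain ⟨a1, a2⟩ := h p mp 0 m0 hp.le
    obtain ⟨b1, b2⟩ := h 0 m0 (-p) mm (by linarith)
    rw [abs_lt] at hν
    rcases hg with hg | ⟨hg1, hg2⟩ | hg
    · right
      refine ⟨?_, Or.inl ?_, ?_⟩
      · have key : ∀ x ∈ Icc (-p) p, ∀ y ∈ Icc (-p) p, y ≤ x → (1 + γ) * |x - y| ≤ |f x - f y| := by
          intro x hx y hy hyx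
          obtain ⟨h1, h2⟩ := h x hx y hy hyx
          have h3 : 0 ≤ x - y := sub_nonneg.2 hyx
          rw [abs_of_nonneg h3, le_abs]
          left; nlinarith
        intro x hx y hy
        rcases le_total y x with h | h
        · exact key x hx y hy h
        · rw [abs_sub_comm, abs_sub_comm (f x)]; exact key y hy x hx h
      · intro y hy x hx hyx
        have := (h x hx y hy hyx.le).1
        nlinarith
      · refine subset_trans ?_ (intermediate_value_Icc (by linarith : -p ≤ p) h.cont)
        apply Icc_subset_Icc <;> nlinarith
    · left
      have key : ∀ x ∈ Icc (-p) p, ∀ y ∈ Icc (-p) p, y ≤ x → |f x - f y| ≤ (1 - γ) * |x - y| := by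
        intro x hx y hy hyx
        obtain ⟨h1, h2⟩ := h x hx y hy hyx
        have h3 : 0 ≤ x - y := sub_nonneg.2 hyx
        rw [abs_of_nonneg h3, abs_le]
        constructor <;> nlinarith
      intro x hx y hy
      rcases le_total y x with h | h
      · exact key x hx y hy h
      · rw [abs_sub_comm, abs_sub_comm x]; exact key y hy x hx h
    · right
      refine ⟨?_, Or.inr ?_, ?_⟩
      · have key : ∀ x ∈ Icc (-p) p, ∀ y ∈ Icc (-p) p, y ≤ x → (1 + γ) * |x - y| ≤ |f x - f y| := by
          intro x hx y hy hyx
          obtain ⟨h1, h2⟩ := h x hx y hy hyx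
          have h3 : 0 ≤ x - y := sub_nonneg.2 hyx
          rw [abs_of_nonneg h3, le_abs]
          right; nlinarith
        intro x hx y hy
        rcases le_total y x with h | h
        · exact key x hx y hy h
        · rw [abs_sub_comm, abs_sub_comm (f x)]; exact key y hy x hx h
      · intro y hy x hx hyx
        have := (h x hx y hy hyx.le).2
        nlinarith
      · refine subset_trans ?_ (intermediate_value_Icc' (by linarith : -p ≤ p) h.cont)
        apply Icc_subset_Icc <;> nlinarith
  rcases hor with hc | ⟨he, hmono, hsurj⟩
  · -- contraction
    obtain ⟨u, hu, hue, hub⟩ := series_sol (fun x => f (cl p x)) (fun x => w (cl p x))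
      (fun x => |cl p x - xs|) (1 - γ / 2) K (2 * p) (by linarith) (by linarith) hK
      (h.cont.comp_continuous (cl_cont p) (cl_mem hp)) (hwc.comp_continuous (cl_cont p) (cl_mem hp))
      (by
        intro x
        have h1 := hc _ (cl_mem hp x) xs hxs'
        have h2 := cl_lip p (f (cl p x)) (f xs)
        rw [hfx] at h1 h2
        rw [cl_eq hxs'] at h2
        have := abs_nonneg (cl p x - xs)
        nlinarith) hB (fun x => hw _ (cl_mem hp x))
    refine ⟨u, hu, hub, ?_, ?_⟩
    · intro x hx _
      have := hue x
      rwa [cl_eq (Ioo_subset_Icc_self hx)] at this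
    · intro x hx _ t ht
      have ht' : t ∈ Ioo (-p) p :=
        (ordConnected_Ioo.uIcc_subset (show (0:ℝ) ∈ Ioo (-p) p from ⟨by linarith, hp⟩) hx) ht
      have h1 := hc t (Ioo_subset_Icc_self ht') 0 m0
      have h2 : |t| < p := abs_lt.2 ht'
      rw [sub_zero] at h1
      have h3 := abs_sub_abs_le_abs_sub (f t) (f 0)
      have : |f t| < p := by nlinarith [abs_nonneg t]
      exact abs_lt.1 this
  · -- expansion
    have hex : ∀ y, ∃ x ∈ Icc (-p) p, f x = cl p y := fun y => hsurj (cl_mem hp y)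
    choose F hF hfF using hex
    have hFl : ∀ y y', |F y - F y'| ≤ (1 - γ / 2) * |cl p y - cl p y'| := by
      intro y y'
      have := he _ (hF y) _ (hF y')
      rw [hfF, hfF] at this
      have h0 := abs_nonneg (F y - F y')
      have : (1 - γ / 2) * ((1 + γ) * |F y - F y'|) ≤ (1 - γ / 2) * |cl p y - cl p y'| := by
        apply mul_le_mul_of_nonneg_left this; linarith
      have e : 0 ≤ (γ * (1 - γ) / 2) * |F y - F y'| := by
        apply mul_nonneg _ h0
        have := mul_nonneg hγ.le (sub_nonneg.2 hγ1)
        linarith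
      nlinarith
    have hFf : ∀ x ∈ Icc (-p) p, f x ∈ Icc (-p) p → F (f x) = x := by
      intro x hx hfx
      have hinj : InjOn f (Icc (-p) p) := by
        rcases hmono with hm | hm
        · exact hm.injOn
        · exact hm.injOn
      exact hinj (hF _) hx (by rw [hfF, cl_eq hfx])
    have hFxs : F xs = xs := by
      have := hFf xs hxs' (by rwa [hfx])
      rwa [hfx] at this
    have hFc : Continuous F := by
      have : LipschitzWith 1 F := by
        apply LipschitzWith.of_dist_le_mul
        intro x y
        rw [Real.dist_eq, Real.dist_eq, NNReal.coe_one, one_mul]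
        have h1 := hFl x y
        have h2 := cl_lip p x y
        have := abs_nonneg (cl p x - cl p y)
        nlinarith
      exact this.continuous
    have hFe : ∀ y, |F y - xs| ≤ (1 - γ / 2) * |cl p y - xs| := by
      intro y
      have := hFl y xs
      rwa [hFxs, cl_eq hxs'] at this
    obtain ⟨u, hu, hue, hub⟩ := series_sol F (fun y => - w (F y))
      (fun x => |cl p x - xs|) (1 - γ / 2) K (2 * p) (by linarith) (by linarith) hK
      hFc (hwc.comp_continuous hFc hF).neg
      (by
        intro y
        rw [cl_eq (hF y)]
        exact hFe y) hB
      (by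
        intro y
        rw [abs_neg]
        refine (hw _ (hF y)).trans (mul_le_mul_of_nonneg_left ?_ hK)
        have h1 := hFe y
        have := abs_nonneg (cl p y - xs)
        nlinarith)
    refine ⟨u, hu, hub, ?_, ?_⟩
    · intro x hx hfx
      have := hue (f x)
      rw [hFf x (Ioo_subset_Icc_self hx) (Ioo_subset_Icc_self hfx)] at this
      linarith
    · intro x hx hfx t ht
      have o0 : (0:ℝ) ∈ Ioo (-p) p := ⟨by linarith, hp⟩
      have ht' : t ∈ Icc (-p) p := Ioo_subset_Icc_self ((ordConnected_Ioo.uIcc_subset o0 hx) ht)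
      have hx' := Ioo_subset_Icc_self hx
      have hf0 : f 0 ∈ Ioo (-p) p := abs_lt.1 (by nlinarith)
      apply ordConnected_Ioo.uIcc_subset hf0 hfx
      rcases hmono with hm | hm
      · have hm := hm.monotoneOn
        rw [mem_uIcc] at ht ⊢
        rcases ht with ht | ht
        · left; exact ⟨hm m0 ht' ht.1, hm ht' hx' ht.2⟩
        · right; exact ⟨hm hx' ht' ht.1, hm ht' m0 ht.2⟩
      · have hm := hm.antitoneOn
        rw [mem_uIcc] at ht ⊢
        rcases ht with ht | ht
        · right; exact ⟨hm ht' hx' ht.2, hm m0 ht' ht.1⟩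
        · left; exact ⟨hm ht' m0 ht.2, hm hx' ht' ht.1⟩

theorem log_lip (x y : ℝ) (hx : |x - 1| ≤ 1/2) (hy : |y - 1| ≤ 1/2) :
    |Real.log x - Real.log y| ≤ 2 * |x - y| := by
  have key : ∀ x y : ℝ, |x - 1| ≤ 1/2 → |y - 1| ≤ 1/2 → Real.log x - Real.log y ≤ 2 * |x - y| := by
    intro x y hx hy
    rw [abs_le] at hx hy
    have hx0 : 0 < x := by linarith
    have hy0 : 0 < y := by linarith
    rw [← Real.log_div hx0.ne' hy0.ne']
    refine (Real.log_le_sub_one_of_pos (by positivity)).trans ?_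
    have : x / y - 1 = (x - y) / y := by field_simp
    rw [this, div_le_iff₀ hy0]
    nlinarith [le_abs_self (x - y), abs_nonneg (x - y)]
  rw [abs_le]
  have h1 := key x y hx hy
  have h2 := key y x hy hx
  rw [abs_sub_comm] at h2
  constructor <;> linarith

theorem single (fl fr f D : ℝ → ℝ) (p α b γ L kl kr xs ε : ℝ) (hp : 0 < p) (hγ : 0 < γ) (hγ1 : γ ≤ 1)
    (hL : 0 < L) (hfl : ∀ x ≤ 0, f x = fl x) (hfr : ∀ x, 0 ≤ x → f x = fr x)
    (hdl : ∀ x ∈ Icc (-p) 0, HasDerivAt fl (kl * D x) x)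
    (hdr : ∀ x ∈ Icc 0 p, HasDerivAt fr (kr * D x) x)
    (h : SlopeC f p α b) (hg : GapC γ α b) (hν : |f 0| < γ * p) (hxs : xs ∈ Ioo (-p) p)
    (hfx : f xs = xs) (hD : ∀ x ∈ Icc (-p) p, ∀ y ∈ Icc (-p) p, |D x - D y| ≤ L * |x - y|)
    (hD1 : ∀ x ∈ Icc (-p) p, |D x - 1| ≤ 1/2) (hε : ε = 8 * L * p / γ) :
    ∃ qm qp, qm < 0 ∧ 0 < qp ∧
      DiffConjOn f (enf (f 0) (kl * D xs) (kr * D xs) 0) (Ioo (-p) p) (Ioo qm qp) ∧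
      Real.exp (-2 * ε) * p ≤ |qm| ∧ |qm| ≤ Real.exp (2 * ε) * p ∧
      Real.exp (-2 * ε) * p ≤ |qp| ∧ |qp| ≤ Real.exp (2 * ε) * p := by
  have hxs' := Ioo_subset_Icc_self hxs
  have hDc : ContinuousOn D (Icc (-p) p) := by
    have : LipschitzOnWith (Real.toNNReal L) D (Icc (-p) p) := by
      apply LipschitzOnWith.of_dist_le_mul
      intro x hx y hy
      rw [Real.coe_toNNReal _ hL.le, Real.dist_eq, Real.dist_eq]
      exact hD x hx y hy
    exact this.continuousOn
  have hDpos : ∀ x ∈ Icc (-p) p, 0 < D x := by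
    intro x hx
    have := abs_le.1 (hD1 x hx)
    linarith
  obtain ⟨u, hu, hub, hue, hconn⟩ := u_exists f (fun x => Real.log (D x) - Real.log (D xs)) p α b γ
    (2 * L) xs hp hγ hγ1 h hg hν hxs hfx (by positivity)
    ((hDc.log fun x hx => (hDpos x hx).ne').sub continuousOn_const)
    (by
      intro x hx
      have h1 := log_lip (D x) (D xs) (hD1 x hx) (hD1 xs hxs')
      have h2 := hD x hx xs hxs'
      linarith)
  have hub' : ∀ x, |u x| ≤ ε := by
    intro x
    refine (hub x).trans (le_of_eq ?_)
    rw [hε, show 1 - (1 - γ / 2) = γ / 2 by ring]; field_simp; ring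
  set A := Real.exp ε with hA
  set A' := Real.exp (-ε) with hA'
  have hAA : A * A' = 1 := by rw [hA, hA', ← Real.exp_add]; simp
  have hApos : 0 < A := Real.exp_pos _
  have hApos' : 0 < A' := Real.exp_pos _
  have hA2 : Real.exp (2 * ε) = A * A := by rw [hA, ← Real.exp_add]; ring_nf
  have hA2' : Real.exp (-2 * ε) = A' * A' := by rw [hA', ← Real.exp_add]; ring_nf
  have hlo : ∀ t, A' ≤ Real.exp (u t) := fun t => Real.exp_le_exp.2 (abs_le.1 (hub' t)).1
  have hhi : ∀ t, Real.exp (u t) ≤ A := fun t => Real.exp_le_exp.2 (abs_le.1 (hub' t)).2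
  have huc : Continuous (fun t => Real.exp (u t)) := Real.continuous_exp.comp hu
  set H : ℝ → ℝ := fun x => ∫ t in (0:ℝ)..x, Real.exp (u t) with hH
  have hHd : ∀ x, HasDerivAt H (Real.exp (u x)) x := fun x => (huc.integral_hasStrictDerivAt 0 x).hasDerivAt
  have hH0 : H 0 = 0 := by simp [hH]
  have hHb : ∀ y x, y ≤ x → A' * (x - y) ≤ H x - H y ∧ H x - H y ≤ A * (x - y) := fun y x hyx =>
    mv_bd H _ A' A x y hyx (fun t _ => hHd t) (fun t _ => hlo t) (fun t _ => hhi t)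
  obtain ⟨c, hc1, hc2, hcν⟩ : ∃ c, A' ≤ c ∧ c ≤ A ∧ c * H (f 0) = f 0 := by
    rcases lt_trichotomy (f 0) 0 with hn | hn | hn
    · obtain ⟨h1, h2⟩ := hHb _ _ hn.le
      rw [hH0] at h1 h2
      have hneg : H (f 0) < 0 := by nlinarith
      refine ⟨f 0 / H (f 0), ?_, ?_, div_mul_cancel₀ _ hneg.ne⟩
      · rw [le_div_iff_of_neg hneg]; nlinarith
      · rw [div_le_iff_of_neg hneg]; nlinarith
    · refine ⟨1, ?_, ?_, by rw [hn, hH0]; simp⟩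
      · have := (hlo 0).trans (hhi 0); nlinarith
      · have := (hlo 0).trans (hhi 0); nlinarith
    · obtain ⟨h1, h2⟩ := hHb _ _ hn.le
      rw [hH0] at h1 h2
      have hneg : 0 < H (f 0) := by nlinarith
      refine ⟨f 0 / H (f 0), ?_, ?_, div_mul_cancel₀ _ hneg.ne'⟩
      · rw [le_div_iff₀ hneg]; nlinarith
      · rw [div_le_iff₀ hneg]; nlinarith
  have hcpos : 0 < c := hApos'.trans_le hc1
  set k : ℝ → ℝ := fun x => c * H x with hk
  have hkd : ∀ x, HasDerivAt k (c * Real.exp (u x)) x := fun x => (hHd x).const_mul c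
  have hk0 : k 0 = 0 := by simp [hk, hH0]
  have hkmono : StrictMono k := strictMono_of_deriv_pos (by
    intro x; rw [(hkd x).deriv]; positivity)
  have hdiff := diffeo_of_deriv k (fun x => c * Real.exp (u x)) (c * A') p (by positivity)
    (continuous_const.mul huc) (fun t => mul_le_mul_of_nonneg_left (hlo t) hcpos.le) hkd hk0
  have hm : k (-p) < 0 := by rw [← hk0]; exact hkmono (by linarith)
  have hpp : 0 < k p := by rw [← hk0]; exact hkmono hp
  have o0 : (0:ℝ) ∈ Ioo (-p) p := ⟨by linarith, hp⟩
  have hexp : ∀ x ∈ Ioo (-p) p, f x ∈ Ioo (-p) p → Real.exp (u (f x)) * D x = D xs * Real.exp (u x) := by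
    intro x hx hfx
    have h1 := hue x hx hfx
    have h2 : u (f x) + Real.log (D x) = Real.log (D xs) + u x := by linarith
    have h3 := congrArg Real.exp h2
    rwa [Real.exp_add, Real.exp_add, Real.exp_log (hDpos _ (Ioo_subset_Icc_self hx)),
      Real.exp_log (hDpos _ hxs')] at h3
  refine ⟨k (-p), k p, hm, hpp, ⟨k, hdiff, ?_⟩, ?_⟩
  · intro x hx hfx
    have hsub := ordConnected_Ioo.uIcc_subset o0 hx
    have hall := hconn x hx hfx
    rcases le_or_gt x 0 with hx0 | hx0
    · have hkx : k x ≤ 0 := by rw [← hk0]; exact hkmono.monotone hx0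
      have hle : ∀ t ∈ uIcc 0 x, t ≤ 0 := by intro t ht; rw [uIcc_of_ge hx0] at ht; exact ht.2
      rw [enf, if_pos hkx, hfl x hx0]
      have := side_conj k u fl (fun t => kl * D t) c (kl * D xs) (f 0) x hkd hk0 hcν (hfl 0 le_rfl).symm
        (fun t ht => hdl t ⟨(hsub ht).1.le, hle t ht⟩)
        (fun t ht => by
          have := hexp t (hsub ht) (hall t ht)
          rw [hfl t (hle t ht)] at this
          linear_combination kl * this)
      rw [this]; ring
    · have hkx : 0 < k x := by rw [← hk0]; exact hkmono hx0
      have hle : ∀ t ∈ uIcc 0 x, 0 ≤ t := by intro t ht; rw [uIcc_of_le hx0.le] at ht; exact ht.1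
      rw [enf, if_neg hkx.not_ge, hfr x hx0.le]
      exact side_conj k u fr (fun t => kr * D t) c (kr * D xs) (f 0) x hkd hk0 hcν (hfr 0 le_rfl).symm
        (fun t ht => hdr t ⟨hle t ht, (hsub ht).2.le⟩)
        (fun t ht => by
          have := hexp t (hsub ht) (hall t ht)
          rw [hfr t (hle t ht)] at this
          linear_combination kr * this)
  · rw [abs_of_neg hm, abs_of_pos hpp, hA2, hA2']
    obtain ⟨h1, h2⟩ := hHb 0 p hp.le
    obtain ⟨h3, h4⟩ := hHb (-p) 0 (by linarith)
    rw [hH0, sub_zero, sub_zero] at h1 h2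
    rw [hH0, zero_sub, zero_sub, neg_neg] at h3 h4
    have hAp : 0 ≤ A' * p := by positivity
    have e : -k (-p) = c * (- H (-p)) := by simp [hk]
    rw [e]
    refine ⟨?_, ?_, ?_, ?_⟩
    · rw [mul_assoc]; exact mul_le_mul hc1 h3 hAp hcpos.le
    · rw [mul_assoc]; exact mul_le_mul hc2 h4 (hAp.trans h3) hApos.le
    · rw [mul_assoc]; exact mul_le_mul hc1 h1 hAp hcpos.le
    · rw [mul_assoc]; exact mul_le_mul hc2 h2 (hAp.trans h1) hApos.le

theorem gap_exists (aL aR : ℝ) (h1 : (aL - 1) * (aR - 1) > 0) (h2 : (aL + 1) * (aR + 1) > 0) :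
    ∃ γ > 0, γ ≤ 1 ∧ ∃ α b, α < aL ∧ aL < b ∧ α < aR ∧ aR < b ∧ GapC γ α b := by
  rcases mul_pos_iff.1 h1 with ⟨a1, a2⟩ | ⟨a1, a2⟩
  · refine ⟨min 1 (min ((aL - 1)/2) ((aR - 1)/2)), ?_, min_le_left _ _, 1 + min 1 (min ((aL - 1)/2) ((aR - 1)/2)),
      max aL aR + 1, ?_, ?_, ?_, ?_, Or.inl le_rfl⟩ <;> grind
  · rcases mul_pos_iff.1 h2 with ⟨b1, b2⟩ | ⟨b1, b2⟩
    · obtain ⟨γ, hγ, g0, g1, g2, g3, g4⟩ : ∃ γ > 0, γ ≤ 1 ∧ γ < aL + 1 ∧ γ < aR + 1 ∧ γ < 1 - aL ∧ γ < 1 - aR := by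
        refine ⟨min 1 (min (min ((aL + 1)/2) ((aR + 1)/2)) (min ((1 - aL)/2) ((1 - aR)/2))), ?_, ?_, ?_, ?_, ?_, ?_⟩ <;> grind
      exact ⟨γ, hγ, g0, -1 + γ, 1 - γ, by linarith, by linarith, by linarith, by linarith, Or.inr (Or.inl ⟨le_rfl, le_rfl⟩)⟩
    · refine ⟨min 1 (min ((-1 - aL)/2) ((-1 - aR)/2)), ?_, min_le_left _ _, min aL aR - 1,
        -1 - min 1 (min ((-1 - aL)/2) ((-1 - aR)/2)), ?_, ?_, ?_, ?_, Or.inr (Or.inr le_rfl)⟩ <;> grind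

end helpers

/-- Theorem 2.1 (trivial border-collision bifurcations).
Here `Ω = (ω₁, ω₂)` and `I = (ι₁, ι₂)` are the open intervals containing `0` on which the
piecewise-`C²` family is defined, `aL, aR` are the one-sided slopes at the bifurcation,
and `β` is the common `μ`-derivative at the origin; `ν(μ) = f(0;μ) = f_L(0;μ)`. -/
theorem stmt0 (ω₁ ω₂ ι₁ ι₂ aL aR β : ℝ) (fL fR : ℝ → ℝ → ℝ)
    (hω₁ : ω₁ < 0) (hω₂ : 0 < ω₂) (hι₁ : ι₁ < 0) (hι₂ : 0 < ι₂)
    (hfL : ContDiffOn ℝ 2 (fun p : ℝ × ℝ => fL p.1 p.2) (Set.Ioo ω₁ ω₂ ×ˢ Set.Ioo ι₁ ι₂))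
    (hfR : ContDiffOn ℝ 2 (fun p : ℝ × ℝ => fR p.1 p.2) (Set.Ioo ω₁ ω₂ ×ˢ Set.Ioo ι₁ ι₂))
    (hcont : ∀ μ ∈ Set.Ioo ι₁ ι₂, fL 0 μ = fR 0 μ)
    (hbcb : fL 0 0 = 0)
    (haL : deriv (fun x => fL x 0) 0 = aL)
    (haR : deriv (fun x => fR x 0) 0 = aR)
    (hβL : deriv (fun μ => fL 0 μ) 0 = β)
    (hβR : deriv (fun μ => fR 0 μ) 0 = β)
    (hβ : 0 < β)
    (h1 : (aL - 1) * (aR - 1) > 0) (h2 : (aL + 1) * (aR + 1) > 0)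
    (haL0 : aL ≠ 0) (haR0 : aR ≠ 0) :
    ∃ μ₀ > 0, Set.Ioo (-μ₀) μ₀ ⊆ Set.Ioo ι₁ ι₂ ∧
      ∃ sL sR : ℝ → ℝ,
        ContinuousOn sL (Set.Ioo (-μ₀) μ₀) ∧ ContinuousOn sR (Set.Ioo (-μ₀) μ₀) ∧
        (fun μ => sL μ - aL) =O[nhds (0:ℝ)] (fun μ => μ) ∧
        (fun μ => sR μ - aR) =O[nhds (0:ℝ)] (fun μ => μ) ∧
        (∃ N : Set ℝ, IsOpen N ∧ (0:ℝ) ∈ N ∧ N ⊆ Set.Ioo ω₁ ω₂ ∧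
          ∃ M : ℝ → Set ℝ, ∀ μ ∈ Set.Ioo (-μ₀) μ₀,
            IsOpen (M μ) ∧ (0:ℝ) ∈ M μ ∧
            DiffConjOn (pwFam fL fR μ) (enf (fL 0 μ) (sL μ) (sR μ) 0) N (M μ)) ∧
        (∀ δ > 0, ∃ μ₁ > 0, μ₁ ≤ μ₀ ∧
          ∃ p > 0, Set.Ioo (-p) p ⊆ Set.Ioo ω₁ ω₂ ∧
            ∃ qm qp : ℝ → ℝ, ∀ μ ∈ Set.Ioo (-μ₁) μ₁,
              qm μ < 0 ∧ 0 < qp μ ∧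
              DiffConjOn (pwFam fL fR μ) (enf (fL 0 μ) (sL μ) (sR μ) 0)
                (Set.Ioo (-p) p) (Set.Ioo (qm μ) (qp μ)) ∧
              (1 - δ) * p < |qm μ| ∧ |qm μ| < (1 + δ) * p ∧
              (1 - δ) * p < |qp μ| ∧ |qp μ| < (1 + δ) * p) := by
  obtain ⟨γ, hγ, hγ1, α, b, hα1, hb1, hα2, hb2, hg⟩ := gap_exists aL aR h1 h2
  obtain ⟨r₁, hr₁, L₁, hL₁, kL, EL, hkL0, HL⟩ :=
    side_data ω₁ ω₂ ι₁ ι₂ aL α b fL hω₁ hω₂ hι₁ hι₂ hfL haL haL0 hα1 hb1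
  obtain ⟨r₂, hr₂, L₂, hL₂, kR, ER, hkR0, HR⟩ :=
    side_data ω₁ ω₂ ι₁ ι₂ aR α b fR hω₁ hω₂ hι₁ hι₂ hfR haR haR0 hα2 hb2
  obtain ⟨r, hr, hrr₁, hrr₂⟩ : ∃ r > 0, r ≤ r₁ ∧ r ≤ r₂ :=
    ⟨min r₁ r₂, lt_min hr₁ hr₂, min_le_left _ _, min_le_right _ _⟩
  obtain ⟨L, hL, hLL₁, hLL₂⟩ : ∃ L > 0, L₁ ≤ L ∧ L₂ ≤ L :=
    ⟨max L₁ L₂, lt_max_of_lt_left hL₁, le_max_left _ _, le_max_right _ _⟩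
  set D : ℝ → ℝ → ℝ := fun x μ => if x ≤ 0 then EL x μ else ER x μ with hDdef
  have r0 : |(0:ℝ)| < r := by simpa
  have HL' := fun x μ (hx : |x| < r) (hμ : |μ| < r) => HL x μ (hx.trans_le hrr₁) (hμ.trans_le hrr₁)
  have HR' := fun x μ (hx : |x| < r) (hμ : |μ| < r) => HR x μ (hx.trans_le hrr₂) (hμ.trans_le hrr₂)
  have hDl : ∀ x μ, x ≤ 0 → D x μ = EL x μ := fun x μ hx => if_pos hx
  have hDr : ∀ x μ, 0 ≤ x → |μ| < r → D x μ = ER x μ := by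
    intro x μ hx hμ
    rcases hx.eq_or_lt with rfl | hx
    · rw [hDl 0 μ le_rfl, (HL' 0 μ r0 hμ).2.2.2.1, (HR' 0 μ r0 hμ).2.2.2.1]
    · exact if_neg hx.not_ge
  have hD0 : ∀ μ, |μ| < r → D 0 μ = 1 := by
    intro μ hμ
    rw [hDl 0 μ le_rfl, (HL' 0 μ r0 hμ).2.2.2.1]
  have hD1 : ∀ x μ, |x| < r → |μ| < r → |D x μ - 1| ≤ 1/2 := by
    intro x μ hx hμ
    rcases le_total x 0 with h | h
    · rw [hDl x μ h]; exact (HL' x μ hx hμ).2.2.2.2.1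
    · rw [hDr x μ h hμ]; exact (HR' x μ hx hμ).2.2.2.2.1
  have hELl : ∀ x μ x' μ', |x| < r → |μ| < r → |x'| < r → |μ'| < r →
      |EL x μ - EL x' μ'| ≤ L * (|x - x'| + |μ - μ'|) := by
    intro x μ x' μ' hx hμ hx' hμ'
    exact ((HL' x μ hx hμ).2.2.2.2.2.2.2 x' μ' (hx'.trans_le hrr₁) (hμ'.trans_le hrr₁)).1.trans (by gcongr)
  have hERl : ∀ x μ x' μ', |x| < r → |μ| < r → |x'| < r → |μ'| < r →
      |ER x μ - ER x' μ'| ≤ L * (|x - x'| + |μ - μ'|) := by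
    intro x μ x' μ' hx hμ hx' hμ'
    exact ((HR' x μ hx hμ).2.2.2.2.2.2.2 x' μ' (hx'.trans_le hrr₂) (hμ'.trans_le hrr₂)).1.trans (by gcongr)
  have hcross : ∀ x μ x' μ', |x| < r → |μ| < r → |x'| < r → |μ'| < r → x ≤ 0 → 0 ≤ x' →
      |D x μ - D x' μ'| ≤ L * (|x - x'| + |μ - μ'|) := by
    intro x μ x' μ' hx hμ hx' hμ' h h'
    have e1 := hELl x μ 0 μ hx hμ r0 hμ
    have e2 := hERl 0 μ' x' μ' r0 hμ' hx' hμ'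
    rw [← hDl x μ h, ← hDl 0 μ le_rfl, hD0 μ hμ] at e1
    rw [← hDr x' μ' h' hμ', ← hDr 0 μ' le_rfl hμ', hD0 μ' hμ'] at e2
    have e3 := abs_sub_le (D x μ) 1 (D x' μ')
    simp only [sub_self, abs_zero, add_zero, sub_zero, zero_sub, abs_neg] at e1 e2
    have e4 : |x - x'| = |x| + |x'| := by
      rw [abs_of_nonpos h, abs_of_nonneg h', abs_of_nonpos (by linarith)]; ring
    rw [e4]
    have := mul_nonneg hL.le (abs_nonneg (μ - μ'))
    linarith
  have hDlip : ∀ x μ x' μ', |x| < r → |μ| < r → |x'| < r → |μ'| < r →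
      |D x μ - D x' μ'| ≤ L * (|x - x'| + |μ - μ'|) := by
    intro x μ x' μ' hx hμ hx' hμ'
    rcases le_total x 0 with h | h <;> rcases le_total x' 0 with h' | h'
    · rw [hDl x μ h, hDl x' μ' h']; exact hELl x μ x' μ' hx hμ hx' hμ'
    · exact hcross x μ x' μ' hx hμ hx' hμ' h h'
    · rw [abs_sub_comm, abs_sub_comm x, abs_sub_comm μ]
      exact hcross x' μ' x μ hx' hμ' hx hμ h' h
    · rw [hDr x μ h hμ, hDr x' μ' h' hμ']; exact hERl x μ x' μ' hx hμ hx' hμ'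
  have hkLl : ∀ μ μ', |μ| < r → |μ'| < r → |kL μ - kL μ'| ≤ L * |μ - μ'| := by
    intro μ μ' hμ hμ'
    exact ((HL' 0 μ r0 hμ).2.2.2.2.2.2.2 0 μ' (r0.trans_le hrr₁) (hμ'.trans_le hrr₁)).2.1.trans (by gcongr)
  have hkRl : ∀ μ μ', |μ| < r → |μ'| < r → |kR μ - kR μ'| ≤ L * |μ - μ'| := by
    intro μ μ' hμ hμ'
    exact ((HR' 0 μ r0 hμ).2.2.2.2.2.2.2 0 μ' (r0.trans_le hrr₂) (hμ'.trans_le hrr₂)).2.1.trans (by gcongr)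
  have hflip : ∀ x μ μ', |x| < r → |μ| < r → |μ'| < r →
      |pwFam fL fR μ x - pwFam fL fR μ' x| ≤ L * |μ - μ'| := by
    intro x μ μ' hx hμ hμ'
    simp only [pwFam]
    split_ifs
    · exact ((HL' x μ hx hμ).2.2.2.2.2.2.2 0 μ' (r0.trans_le hrr₁) (hμ'.trans_le hrr₁)).2.2.trans (by gcongr)
    · exact ((HR' x μ hx hμ).2.2.2.2.2.2.2 0 μ' (r0.trans_le hrr₂) (hμ'.trans_le hrr₂)).2.2.trans (by gcongr)
  have hf0 : ∀ μ, pwFam fL fR μ 0 = fL 0 μ := fun μ => if_pos le_rfl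
  have hfl : ∀ μ, ∀ x ≤ 0, pwFam fL fR μ x = fL x μ := fun μ x hx => if_pos hx
  have hfr : ∀ μ, |μ| < r → ∀ x, 0 ≤ x → pwFam fL fR μ x = fR x μ := by
    intro μ hμ x hx
    rcases hx.eq_or_lt with rfl | hx
    · rw [hf0]; exact hcont μ (HL' 0 μ r0 hμ).2.1
    · exact if_neg hx.not_ge
  have hlt : ∀ p, p < r → ∀ x ∈ Set.Icc (-p) p, |x| < r := fun p hp x hx => (abs_le.2 hx).trans_lt hp
  have hdl : ∀ p μ, p < r → |μ| < r → ∀ x ∈ Set.Icc (-p) 0,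
      HasDerivAt (fun x => fL x μ) (kL μ * D x μ) x ∧ α ≤ kL μ * D x μ ∧ kL μ * D x μ ≤ b := by
    intro p μ hp hμ x hx
    have hp0 : -p ≤ 0 := hx.1.trans hx.2
    have := HL' x μ (hlt p hp x ⟨hx.1, by linarith [hx.2]⟩) hμ
    rw [hDl x μ hx.2]
    exact ⟨this.2.2.1, this.2.2.2.2.2.1, this.2.2.2.2.2.2.1⟩
  have hdr : ∀ p μ, p < r → |μ| < r → ∀ x ∈ Set.Icc 0 p,
      HasDerivAt (fun x => fR x μ) (kR μ * D x μ) x ∧ α ≤ kR μ * D x μ ∧ kR μ * D x μ ≤ b := by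
    intro p μ hp hμ x hx
    have hp0 : 0 ≤ p := hx.1.trans hx.2
    have := HR' x μ (hlt p hp x ⟨by linarith [hx.1], hx.2⟩) hμ
    rw [hDr x μ hx.1 hμ]
    exact ⟨this.2.2.1, this.2.2.2.2.2.1, this.2.2.2.2.2.2.1⟩
  have hslope : ∀ p μ, p < r → |μ| < r → SlopeC (pwFam fL fR μ) p α b := by
    intro p μ hp hμ
    exact slope_bd (fun x => fL x μ) (fun x => fR x μ) _ (fun x => kL μ * D x μ) (fun x => kR μ * D x μ)
      p α b (hfl μ) (hfr μ hμ) (hdl p μ hp hμ) (hdr p μ hp hμ)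
  have hνb : ∀ μ, |μ| < r → |pwFam fL fR μ 0| ≤ L * |μ| := by
    intro μ hμ
    have := hflip 0 μ 0 r0 hμ r0
    rwa [hf0 0, hbcb, sub_zero, sub_zero] at this
  set p₀ := r / 2 with hp₀
  have hp₀pos : 0 < p₀ := by positivity
  have hp₀r : p₀ < r := by linarith
  set m : ℝ → ℝ := fun p => min r (γ * p / L) with hm
  have hmpos : ∀ p, 0 < p → 0 < m p := fun p hp => lt_min hr (by positivity)
  have hmr : ∀ p μ, |μ| < m p → |μ| < r := fun p μ h => h.trans_le (min_le_left _ _)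
  have hmν : ∀ p μ, |μ| < m p → |pwFam fL fR μ 0| < γ * p := by
    intro p μ h
    refine (hνb μ (hmr p μ h)).trans_lt ?_
    have := h.trans_le (min_le_right _ _)
    rw [lt_div_iff₀ hL] at this; linarith
  have hmmono : ∀ p, p ≤ p₀ → m p ≤ m p₀ := fun p hp => by
    simp only [hm]; gcongr
  -- the fixed point
  have hex : ∀ μ, ∃ x, |μ| < m p₀ → x ∈ Set.Ioo (-p₀) p₀ ∧ pwFam fL fR μ x = x := by
    intro μ
    by_cases h : |μ| < m p₀
    · obtain ⟨x, hx, he⟩ := fix_exists hp₀pos (hslope p₀ μ hp₀r (hmr _ _ h)) hγ hg (hmν _ _ h)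
      exact ⟨x, fun _ => ⟨hx, he⟩⟩
    · exact ⟨0, fun h' => absurd h' h⟩
  choose X hX using hex
  have hXr : ∀ μ, |μ| < m p₀ → |X μ| < r := fun μ h => (abs_lt.2 (hX μ h).1).trans hp₀r
  have hXb : ∀ μ, |μ| < m p₀ → γ * |X μ| ≤ |pwFam fL fR μ 0| := by
    intro μ h
    have := fix_sep (hslope p₀ μ hp₀r (hmr _ _ h)) hγ hg (X μ) (Set.Ioo_subset_Icc_self (hX μ h).1) 0
      ⟨by linarith, hp₀pos.le⟩
    rwa [(hX μ h).2, sub_self, sub_zero, sub_zero, zero_sub, abs_neg] at this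
  have hXlip : ∀ μ μ', |μ| < m p₀ → |μ'| < m p₀ → |X μ - X μ'| ≤ L / γ * |μ - μ'| := by
    intro μ μ' h h'
    have e1 := fix_sep (hslope p₀ μ' hp₀r (hmr _ _ h')) hγ hg (X μ) (Set.Ioo_subset_Icc_self (hX μ h).1)
      (X μ') (Set.Ioo_subset_Icc_self (hX μ' h').1)
    rw [(hX μ' h').2, sub_self, sub_zero] at e1
    have e2 := hflip (X μ) μ μ' (hXr μ h) (hmr _ _ h) (hmr _ _ h')
    rw [(hX μ h).2, abs_sub_comm] at e2
    have e3 := e1.trans e2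
    rw [div_mul_eq_mul_div, le_div_iff₀ hγ]; linarith
  have hDXlip : ∀ μ μ', |μ| < m p₀ → |μ'| < m p₀ →
      |D (X μ) μ - D (X μ') μ'| ≤ (L * (L / γ + 1)) * |μ - μ'| := by
    intro μ μ' h h'
    refine (hDlip (X μ) μ (X μ') μ' (hXr μ h) (hmr _ _ h) (hXr μ' h') (hmr _ _ h')).trans ?_
    have := hXlip μ μ' h h'
    rw [mul_assoc, add_mul, one_mul]
    gcongr
  have hm0 : |(0:ℝ)| < m p₀ := by simpa using hmpos p₀ hp₀pos
  have hX0 : X 0 = 0 := by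
    have := hXb 0 hm0
    rw [hf0, hbcb, abs_zero] at this
    have h' : |X 0| ≤ 0 := by
      by_contra hc
      push Not at hc
      have := mul_pos hγ hc
      linarith
    exact abs_eq_zero.1 (le_antisymm h' (abs_nonneg _))
  have hDX0 : D (X 0) 0 = 1 := by rw [hX0]; exact hD0 0 r0
  have hconton : ∀ (g : ℝ → ℝ) (C : ℝ), 0 ≤ C → (∀ μ μ', |μ| < m p₀ → |μ'| < m p₀ → |g μ - g μ'| ≤ C * |μ - μ'|) →
      ContinuousOn g (Set.Ioo (-(m p₀)) (m p₀)) := by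
    intro g C hC hgl
    have : LipschitzOnWith (Real.toNNReal C) g (Set.Ioo (-(m p₀)) (m p₀)) := by
      apply LipschitzOnWith.of_dist_le_mul
      intro x hx y hy
      rw [Real.coe_toNNReal _ hC, Real.dist_eq, Real.dist_eq]
      exact hgl x y (abs_lt.2 hx) (abs_lt.2 hy)
    exact this.continuousOn
  have hDXc : ContinuousOn (fun μ => D (X μ) μ) (Set.Ioo (-(m p₀)) (m p₀)) :=
    hconton _ (L * (L / γ + 1)) (by positivity) hDXlip
  have hbigO : ∀ (k : ℝ → ℝ) (a : ℝ), k 0 = a → (∀ μ μ', |μ| < r → |μ'| < r → |k μ - k μ'| ≤ L * |μ - μ'|) →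
      (fun μ => k μ * D (X μ) μ - a) =O[nhds (0:ℝ)] (fun μ => μ) := by
    intro k a hk0 hk
    apply Asymptotics.IsBigO.of_bound (L * 2 + |a| * (L * (L / γ + 1)))
    filter_upwards [Metric.ball_mem_nhds (0:ℝ) (hmpos p₀ hp₀pos)] with μ hμ
    rw [Metric.mem_ball, Real.dist_eq, sub_zero] at hμ
    rw [Real.norm_eq_abs, Real.norm_eq_abs]
    have e1 := hk μ 0 (hmr _ _ hμ) r0
    have e2 := hDXlip μ 0 hμ hm0
    rw [hDX0, sub_zero] at e2
    rw [hk0, sub_zero] at e1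
    have e3 : |D (X μ) μ| ≤ 2 := by
      have := abs_le.1 (hD1 (X μ) μ (hXr μ hμ) (hmr _ _ hμ))
      rw [abs_le]; constructor <;> linarith
    have e : k μ * D (X μ) μ - a = (k μ - a) * D (X μ) μ + a * (D (X μ) μ - 1) := by ring
    rw [e]
    refine (abs_add_le _ _).trans ?_
    rw [abs_mul, abs_mul]
    calc _ ≤ (L * |μ|) * 2 + |a| * ((L * (L / γ + 1)) * |μ|) := by gcongr
      _ = _ := by ring
  -- the main uniform statement
  have main : ∀ p, 0 < p → p ≤ p₀ → ∀ μ, |μ| < m p → ∃ qm qp, qm < 0 ∧ 0 < qp ∧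
      DiffConjOn (pwFam fL fR μ) (enf (fL 0 μ) (kL μ * D (X μ) μ) (kR μ * D (X μ) μ) 0)
        (Set.Ioo (-p) p) (Set.Ioo qm qp) ∧
      Real.exp (-2 * (8 * L * p / γ)) * p ≤ |qm| ∧ |qm| ≤ Real.exp (2 * (8 * L * p / γ)) * p ∧
      Real.exp (-2 * (8 * L * p / γ)) * p ≤ |qp| ∧ |qp| ≤ Real.exp (2 * (8 * L * p / γ)) * p := by
    intro p hp hpp μ hμ
    have hpr : p < r := by linarith
    have hμ0 := hμ.trans_le (hmmono p hpp)
    have hμr := hmr _ _ hμ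
    have hXp : X μ ∈ Set.Ioo (-p) p := by
      have := (hXb μ hμ0).trans_lt (hmν p μ hμ)
      exact abs_lt.1 (lt_of_mul_lt_mul_left this hγ.le)
    have := single (fun x => fL x μ) (fun x => fR x μ) (pwFam fL fR μ) (fun x => D x μ) p α b γ L
      (kL μ) (kR μ) (X μ) _ hp hγ hγ1 hL (hfl μ) (hfr μ hμr) (fun x hx => (hdl p μ hpr hμr x hx).1)
      (fun x hx => (hdr p μ hpr hμr x hx).1) (hslope p μ hpr hμr) hg (hmν p μ hμ) hXp (hX μ hμ0).2
      (fun x hx y hy => by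
        have := hDlip x μ y μ (hlt p hpr x hx) hμr (hlt p hpr y hy) hμr
        simpa using this)
      (fun x hx => hD1 x μ (hlt p hpr x hx) hμr) rfl
    rwa [hf0] at this
  have hIoo : ∀ p, p < r → Set.Ioo (-p) p ⊆ Set.Ioo ω₁ ω₂ := by
    intro p hp x hx
    exact (HL' x 0 (hlt p hp x (Set.Ioo_subset_Icc_self hx)) r0).1
  refine ⟨m p₀, hmpos p₀ hp₀pos, ?_, fun μ => kL μ * D (X μ) μ, fun μ => kR μ * D (X μ) μ, ?_, ?_, ?_, ?_, ?_, ?_⟩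
  · intro μ hμ
    exact (HL' 0 μ r0 (hmr _ _ (abs_lt.2 hμ))).2.1
  · exact (hconton kL L hL.le fun μ μ' h h' => hkLl μ μ' (hmr _ _ h) (hmr _ _ h')).mul hDXc
  · exact (hconton kR L hL.le fun μ μ' h h' => hkRl μ μ' (hmr _ _ h) (hmr _ _ h')).mul hDXc
  · exact hbigO kL aL hkL0 hkLl
  · exact hbigO kR aR hkR0 hkRl
  · have hq : ∀ μ, ∃ M : Set ℝ, |μ| < m p₀ → IsOpen M ∧ (0:ℝ) ∈ M ∧
        DiffConjOn (pwFam fL fR μ) (enf (fL 0 μ) (kL μ * D (X μ) μ) (kR μ * D (X μ) μ) 0)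
          (Set.Ioo (-p₀) p₀) M := by
      intro μ
      by_cases h : |μ| < m p₀
      · obtain ⟨qm, qp, h1, h2, h3, -⟩ := main p₀ hp₀pos le_rfl μ h
        exact ⟨Set.Ioo qm qp, fun _ => ⟨isOpen_Ioo, ⟨h1, h2⟩, h3⟩⟩
      · exact ⟨∅, fun h' => absurd h' h⟩
    choose M hM using hq
    exact ⟨Set.Ioo (-p₀) p₀, isOpen_Ioo, ⟨by linarith, hp₀pos⟩, hIoo p₀ hp₀r, M,
      fun μ hμ => hM μ (abs_lt.2 hμ)⟩
  · intro δ hδ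
    have hlog : 0 < Real.log (1 + δ) := Real.log_pos (by linarith)
    obtain ⟨p, hp, hpp, hpl⟩ : ∃ p > 0, p ≤ p₀ ∧ 2 * (8 * L * p / γ) < Real.log (1 + δ) := by
      refine ⟨min p₀ (γ * Real.log (1 + δ) / (32 * L)), lt_min hp₀pos (by positivity), min_le_left _ _, ?_⟩
      have h1 : min p₀ (γ * Real.log (1 + δ) / (32 * L)) ≤ γ * Real.log (1 + δ) / (32 * L) := min_le_right _ _
      calc _ ≤ 2 * (8 * L * (γ * Real.log (1 + δ) / (32 * L)) / γ) := by gcongr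
        _ = Real.log (1 + δ) / 2 := by field_simp; norm_num
        _ < _ := by linarith
    have hE : Real.exp (2 * (8 * L * p / γ)) < 1 + δ := by
      rw [← Real.exp_log (show 0 < 1 + δ by linarith)]
      exact Real.exp_lt_exp.2 hpl
    have hE' : 1 - δ < Real.exp (-2 * (8 * L * p / γ)) := by
      rw [show -2 * (8 * L * p / γ) = -(2 * (8 * L * p / γ)) by ring, Real.exp_neg]
      have hpos := Real.exp_pos (2 * (8 * L * p / γ))
      rw [← one_div, lt_div_iff₀ hpos]
      rcases le_or_gt (1 - δ) 0 with h | h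
      · nlinarith
      · nlinarith
    have hq : ∀ μ, ∃ qm qp : ℝ, |μ| < m p → qm < 0 ∧ 0 < qp ∧
        DiffConjOn (pwFam fL fR μ) (enf (fL 0 μ) (kL μ * D (X μ) μ) (kR μ * D (X μ) μ) 0)
          (Set.Ioo (-p) p) (Set.Ioo qm qp) ∧ (1 - δ) * p < |qm| ∧ |qm| < (1 + δ) * p ∧
          (1 - δ) * p < |qp| ∧ |qp| < (1 + δ) * p := by
      intro μ
      by_cases h : |μ| < m p
      · obtain ⟨qm, qp, h1, h2, h3, h4, h5, h6, h7⟩ := main p hp hpp μ h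
        have e1 := mul_lt_mul_of_pos_right hE hp
        have e2 := mul_lt_mul_of_pos_right hE' hp
        exact ⟨qm, qp, fun _ => ⟨h1, h2, h3, by linarith, by linarith, by linarith, by linarith⟩⟩
      · exact ⟨0, 0, fun h' => absurd h' h⟩
    choose qm qp hqq using hq
    exact ⟨m p, hmpos p hp, hmmono p hpp, p, hp, hIoo p (by linarith), qm, qp,
      fun μ hμ => hqq μ (abs_lt.2 hμ)⟩
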